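/- Fix positive integers $r,\Delta$ and a bipartite $\Delta$-bounded graph sequence $\mathcal{F}$. Any $r$-edge-colouring of $K_n$ admits a monochromatic $\mathcal{F}$-tiling of size at most $64\Delta r^\Delta(\log n+2)$, i.e. a collection of at most this many monochromatic subgraphs, each isomorphic to an element of $\mathcal{F}$, whose vertex sets partition $V(K_n)$. -/

import Mathlib

/-!
For one colour class of density at least `1 / r`, dependent random choice produces a large set `U`
of vertices such that few `Δ`-tuples in `U` have a small common neighbourhood. Embedding one side of
a bipartite graph greedily into `U`, and then the other side into the common neighbourhoods, one
finds a monochromatic copy of `F m` in every coloured complete graph on at least `8 Δ r ^ Δ m`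
vertices. Hence a copy covering a fraction `1 / (16 Δ r ^ Δ)` of the uncovered vertices can be
removed in each step, and logarithmically many steps exhaust the graph.
-/

open Finset Function

section PowerMean

lemma card_mul_pow_le_sum_pow {ι K : Type*} [Field K] [LinearOrder K] [IsStrictOrderedRing K]
    {s : Finset ι} {f : ι → K} {x : K} (hf : ∀ i ∈ s, 0 ≤ f i) (hx : 0 ≤ x)
    (h : #s * x ≤ ∑ i ∈ s, f i) (d : ℕ) :
    #s * x ^ d ≤ ∑ i ∈ s, f i ^ d := by
  obtain rfl | hs := s.eq_empty_or_nonempty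
  · simp
  obtain _ | d := d
  · simp
  calc #s * x ^ (d + 1) = (#s * x) ^ (d + 1) / #s ^ d := by
        rw [eq_div_iff (by positivity)]; ring
    _ ≤ (∑ i ∈ s, f i) ^ (d + 1) / #s ^ d := by gcongr
    _ ≤ ∑ i ∈ s, f i ^ (d + 1) := pow_sum_div_card_le_sum_pow hf d

lemma two_mul_div_four_pow_lt {K : Type*} [Field K] [LinearOrder K] [IsStrictOrderedRing K] {x : K}
    (hx : 0 < x) {d : ℕ} (hd : d ≠ 0) : 2 * (x / 4) ^ d < x ^ d := by
  have h : (2 : K) < 4 ^ d := lt_of_lt_of_le (by norm_num) (le_self_pow₀ (by norm_num) hd)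
  rw [div_pow, ← mul_div_assoc, div_lt_iff₀ (by positivity), mul_comm]
  gcongr

end PowerMean

section Tiling

variable {V : Type*} [DecidableEq V] {IsTile : Finset V → Prop} {X p : Finset V} {s : ℕ}

/-- `X` is partitioned into `s` tiles, a tile being a set satisfying `IsTile`. -/
def HasTiling (IsTile : Finset V → Prop) (X : Finset V) (s : ℕ) : Prop :=
  ∃ parts : Fin s → Finset V,
    (∀ j j', j ≠ j' → Disjoint (parts j) (parts j')) ∧
    univ.biUnion parts = X ∧ ∀ j, IsTile (parts j)

lemma hasTiling_empty_zero : HasTiling IsTile ∅ 0 :=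
  ⟨Fin.elim0, fun j => j.elim0, by simp, fun j => j.elim0⟩

lemma HasTiling.cons (hp : IsTile p) (hpX : p ⊆ X) (h : HasTiling IsTile (X \ p) s) :
    HasTiling IsTile X (s + 1) := by
  obtain ⟨parts, hdisj, hcover, htile⟩ := h
  have hdisj_p (j : Fin s) : Disjoint p (parts j) :=
    disjoint_sdiff.mono_right (hcover ▸ subset_biUnion_of_mem parts (mem_univ j))
  refine ⟨Fin.cons p parts, ?_, ?_, Fin.cases hp htile⟩
  · refine Fin.cases (Fin.cases (absurd rfl) fun j _ => hdisj_p j) fun i => ?_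
    exact Fin.cases (fun _ => (hdisj_p i).symm) fun j hij =>
      hdisj i j fun h => hij (congrArg Fin.succ h)
  · calc univ.biUnion (Fin.cons p parts : Fin (s + 1) → Finset V)
        = p ∪ univ.biUnion parts := by ext; simp [Fin.exists_fin_succ]
      _ = X := by rw [hcover, union_sdiff_of_subset hpX]

lemma mul_log_sub_add_one_le {K N m : ℝ} (hK : 0 ≤ K) (hN : 0 < N) (hm : m < N)
    (h : N ≤ K * m) : K * Real.log (N - m) + 1 ≤ K * Real.log N := by
  have hNm : 0 < N - m := sub_pos.mpr hm
  have hlog : Real.log (N - m) - Real.log N ≤ -(m / N) := by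
    calc Real.log (N - m) - Real.log N = Real.log ((N - m) / N) :=
          (Real.log_div hNm.ne' hN.ne').symm
      _ ≤ (N - m) / N - 1 := Real.log_le_sub_one_of_pos (div_pos hNm hN)
      _ = -(m / N) := by field_simp; ring
  have hone : 1 ≤ K * (m / N) := by rwa [← mul_div_assoc, one_le_div hN]
  linarith [mul_le_mul_of_nonneg_left hlog hK]

/-- Greedy tiling: removing a tile from `X` decreases `log #X` by at least `1 / K`. -/
theorem exists_hasTiling_le_log {K : ℝ} (hK : 0 ≤ K)
    (h : ∀ X : Finset V, X.Nonempty → ∃ p ⊆ X, IsTile p ∧ (#X : ℝ) ≤ K * #p) (X : Finset V) :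
    ∃ s : ℕ, HasTiling IsTile X s ∧ (s : ℝ) ≤ K * (Real.log #X + 1) := by
  induction X using Finset.strongInduction with
  | H X ih =>
    obtain rfl | hX := X.eq_empty_or_nonempty
    · exact ⟨0, hasTiling_empty_zero, by simpa using hK⟩
    obtain ⟨p, hpX, hp, hcard⟩ := h X hX
    have hX_pos : (0 : ℝ) < #X := by exact_mod_cast hX.card_pos
    obtain rfl | hne := eq_or_ne p X
    · refine ⟨1, .cons hp hpX (by simpa using hasTiling_empty_zero), ?_⟩
      have hK_one : 1 ≤ K := le_of_mul_le_mul_right (by simpa using hcard) hX_pos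
      have hlog := Real.log_natCast_nonneg #p
      push_cast
      nlinarith
    · have hp_nonempty : p.Nonempty := by
        rw [nonempty_iff_ne_empty]
        rintro rfl
        simp only [card_empty, Nat.cast_zero, mul_zero] at hcard
        exact hX_pos.not_ge hcard
      obtain ⟨s, hs, hs_le⟩ := ih (X \ p) (sdiff_ssubset hpX hp_nonempty)
      refine ⟨s + 1, hs.cons hp hpX, ?_⟩
      have hlt : (#p : ℝ) < #X := by exact_mod_cast card_lt_card (hpX.ssubset_of_ne hne)
      rw [card_sdiff_of_subset hpX, Nat.cast_sub (card_le_card hpX)] at hs_le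
      push_cast
      linarith [mul_log_sub_add_one_le hK hX_pos hlt hcard]

end Tiling

section CommonNeighbors

variable {α β : Type*} [Fintype β] {R : α → β → Prop}

open scoped Classical in
/-- The common neighbourhood of the set `S` in the bipartite graph with edge relation `R`. -/
noncomputable def commonNeighbors (R : α → β → Prop) (S : Set α) : Finset β :=
  {u | ∀ v ∈ S, R v u}

@[simp]
lemma mem_commonNeighbors {S : Set α} {u : β} :
    u ∈ commonNeighbors R S ↔ ∀ v ∈ S, R v u := by
  simp [commonNeighbors]

lemma commonNeighbors_anti : Antitone (commonNeighbors R) :=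
  fun _ _ hST _ hu => mem_commonNeighbors.mpr fun v hv => mem_commonNeighbors.mp hu v (hST hv)

variable [Fintype α]

lemma subset_commonNeighbors_swap_iff {S : Set α} {T : Set β} :
    S ⊆ commonNeighbors (swap R) T ↔ T ⊆ commonNeighbors R S := by
  simp only [Set.subset_def, mem_coe, mem_commonNeighbors, swap]
  exact forall₂_comm

open scoped Classical in
lemma card_filter_subset_commonNeighbors_range (S : Set α) (d : ℕ) :
    #{T : Fin d → β | S ⊆ commonNeighbors (swap R) (Set.range T)} =
      #(commonNeighbors R S) ^ d := by
  rw [← Fintype.card_piFinset_const]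
  congr 1
  ext T
  simp only [subset_commonNeighbors_swap_iff, Set.range_subset_iff, mem_coe, mem_filter_univ,
    Fintype.mem_piFinset]

lemma sum_card_commonNeighbors_range (R : α → β → Prop) (d : ℕ) :
    ∑ T : Fin d → β, #(commonNeighbors (swap R) (Set.range T)) =
      ∑ v, #(commonNeighbors R {v}) ^ d := by
  classical
  calc ∑ T : Fin d → β, #(commonNeighbors (swap R) (Set.range T))
      = ∑ T : Fin d → β, #{v | v ∈ commonNeighbors (swap R) (Set.range T)} := by
        simp only [filter_univ_mem]
    _ = ∑ v, #{T : Fin d → β | v ∈ commonNeighbors (swap R) (Set.range T)} :=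
        sum_card_bipartiteAbove_eq_sum_card_bipartiteBelow _
    _ = ∑ v, #(commonNeighbors R {v}) ^ d := by
        simp only [← card_filter_subset_commonNeighbors_range, Set.singleton_subset_iff, mem_coe]

end CommonNeighbors

section GoodSets

variable {α β : Type*} [Fintype β] {R : α → β → Prop} {m q k : ℕ} {U : Finset α} {S : Set α}

open scoped Classical in
/-- The `k`-tuples in `U`, repetitions allowed, that together with `S` have fewer than `m` common
neighbours. -/
noncomputable def badTuples (R : α → β → Prop) (m : ℕ) (U : Finset α) (k : ℕ) (S : Set α) :
    Finset (Fin k → α) :=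
  {v ∈ Fintype.piFinset fun _ => U | #(commonNeighbors R (S ∪ Set.range v)) < m}

lemma mem_badTuples {v : Fin k → α} :
    v ∈ badTuples R m U k S ↔
      (∀ i, v i ∈ U) ∧ #(commonNeighbors R (S ∪ Set.range v)) < m := by
  simp [badTuples]

lemma cons_mem_badTuples {a : α} {v : Fin k → α} :
    (Fin.cons a v : Fin (k + 1) → α) ∈ badTuples R m U (k + 1) S ↔
      a ∈ U ∧ v ∈ badTuples R m U k (insert a S) := by
  simp only [mem_badTuples, Fin.forall_fin_succ, Fin.cons_zero, Fin.cons_succ, Fin.range_cons,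
    Set.union_insert, Set.insert_union, and_assoc]

lemma card_badTuples_succ (R : α → β → Prop) (m : ℕ) (U : Finset α) (k : ℕ) (S : Set α) :
    #(badTuples R m U (k + 1) S) = ∑ a ∈ U, #(badTuples R m U k (insert a S)) := by
  rw [← card_sigma]
  refine card_nbij' (fun v => ⟨v 0, Fin.tail v⟩) (fun v => Fin.cons v.1 v.2) ?_ ?_ ?_ ?_
  · intro v hv
    rw [mem_coe, ← Fin.cons_self_tail v, cons_mem_badTuples] at hv
    exact mem_sigma.mpr hv
  · intro v hv
    exact cons_mem_badTuples.mpr (mem_sigma.mp hv)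
  · intro v _
    exact Fin.cons_self_tail v
  · intro v _
    simp

lemma card_badTuples_mono {T : Set α} (hST : S ⊆ T) :
    #(badTuples R m U k S) ≤ #(badTuples R m U k T) := by
  refine card_le_card fun v hv => ?_
  rw [mem_badTuples] at hv ⊢
  exact ⟨hv.1, (card_le_card <| commonNeighbors_anti <|
    Set.union_subset_union_left _ hST).trans_lt hv.2⟩

/-- `S` is good if fewer than a fraction `q⁻ᵏ` of the `k`-tuples in `U` are bad for it. This is
what allows `k` more vertices of `U` to be added to `S` one at a time, each choice avoiding a
fraction `q⁻¹` of `U`. -/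
def IsGood (R : α → β → Prop) (m q : ℕ) (U : Finset α) (k : ℕ) (S : Set α) : Prop :=
  q ^ k * #(badTuples R m U k S) < #U ^ k

lemma IsGood.of_succ (hq : 0 < q) (h : IsGood R m q U (k + 1) S) : IsGood R m q U k S := by
  have hU : #U * #(badTuples R m U k S) ≤ #(badTuples R m U (k + 1) S) := by
    rw [card_badTuples_succ, ← smul_eq_mul]
    exact card_nsmul_le_sum _ _ _ fun v _ => card_badTuples_mono (Set.subset_insert v S)
  refine lt_of_mul_lt_mul_left (a := #U) ?_ (Nat.zero_le _)
  calc #U * (q ^ k * #(badTuples R m U k S))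
      = q ^ k * (#U * #(badTuples R m U k S)) := by ring
    _ ≤ q ^ (k + 1) * #(badTuples R m U (k + 1) S) := by
        gcongr
        exact k.le_succ
    _ < #U ^ (k + 1) := h
    _ = #U * #U ^ k := by ring

lemma IsGood.mono_left {l : ℕ} (hq : 0 < q) (hlk : l ≤ k) (h : IsGood R m q U k S) :
    IsGood R m q U l S := by
  induction k, hlk using Nat.le_induction with
  | base => exact h
  | succ k _ ih => exact ih (h.of_succ hq)

lemma isGood_zero : IsGood R m q U 0 S ↔ m ≤ #(commonNeighbors R S) := by
  simp [IsGood, badTuples]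

lemma IsGood.le_card_commonNeighbors (hq : 0 < q) (h : IsGood R m q U k S) :
    m ≤ #(commonNeighbors R S) :=
  isGood_zero.mp (h.mono_left hq k.zero_le)

open scoped Classical in
lemma IsGood.mul_card_filter_not_le (h : IsGood R m q U (k + 1) S) :
    q * #{a ∈ U | ¬ IsGood R m q U k (insert a S)} ≤ #U := by
  set B := {a ∈ U | ¬ IsGood R m q U k (insert a S)}
  have hB : #B * #U ^ k ≤ q ^ k * #(badTuples R m U (k + 1) S) := by
    calc #B * #U ^ k ≤ ∑ a ∈ B, q ^ k * #(badTuples R m U k (insert a S)) :=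
          card_nsmul_le_sum _ _ _ fun a ha => not_lt.mp (mem_filter.mp ha).2
      _ ≤ ∑ a ∈ U, q ^ k * #(badTuples R m U k (insert a S)) :=
          sum_le_sum_of_subset (filter_subset _ _)
      _ = q ^ k * #(badTuples R m U (k + 1) S) := by rw [← mul_sum, card_badTuples_succ]
  refine (lt_of_mul_lt_mul_right (a := #U ^ k) ?_ (Nat.zero_le _)).le
  calc q * #B * #U ^ k ≤ q ^ (k + 1) * #(badTuples R m U (k + 1) S) := by
        rw [pow_succ', mul_assoc, mul_assoc]
        gcongr
    _ < #U ^ (k + 1) := h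
    _ = #U * #U ^ k := by ring

/-- Each of the at most `D` sets `S b` rules out at most `#U / (2 * D)` vertices, so together they
rule out at most half of `U`. -/
lemma exists_forall_isGood_insert {ι : Type*} {D : ℕ} (hD : 0 < D) {B : Finset ι} (hB : #B ≤ D)
    {S : ι → Set α} {k : ι → ℕ} (hS : ∀ b ∈ B, IsGood R m (2 * D) U (k b + 1) (S b))
    {Z : Finset α} (hZ : 2 * #Z < #U) :
    ∃ v ∈ U, v ∉ Z ∧ ∀ b ∈ B, IsGood R m (2 * D) U (k b) (insert v (S b)) := by
  classical
  let ruledOut (b : ι) : Finset α := {v ∈ U | ¬ IsGood R m (2 * D) U (k b) (insert v (S b))}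
  have hruledOut : 2 * #(B.biUnion ruledOut) ≤ #U := by
    refine Nat.le_of_mul_le_mul_left ?_ hD
    calc D * (2 * #(B.biUnion ruledOut)) ≤ D * (2 * ∑ b ∈ B, #(ruledOut b)) := by
          gcongr
          exact card_biUnion_le
      _ = ∑ b ∈ B, 2 * D * #(ruledOut b) := by rw [← mul_sum]; ring
      _ ≤ #B * #U := sum_le_card_nsmul _ _ _ fun b hb => (hS b hb).mul_card_filter_not_le
      _ ≤ D * #U := by gcongr
  obtain ⟨v, hvU, hv⟩ : ∃ v ∈ U, v ∉ B.biUnion ruledOut ∪ Z := by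
    apply exists_mem_notMem_of_card_lt_card
    have := card_union_le (B.biUnion ruledOut) Z
    omega
  simp only [mem_union, mem_biUnion, ruledOut, mem_filter, not_or, not_exists, not_and,
    not_not] at hv
  exact ⟨v, hvU, hv.2, fun b hb => hv.1 b hb hvU⟩

end GoodSets

section DependentRandomChoice

variable {α β : Type*} [Fintype α] [Fintype β]

lemma sum_card_badTuples_le (R : α → β → Prop) (m k d : ℕ) :
    ∑ T : Fin d → β, #(badTuples R m (commonNeighbors (swap R) (Set.range T)) k ∅) ≤
      Fintype.card α ^ k * m ^ d := by
  classical
  let bad : Finset (Fin k → α) := {v | #(commonNeighbors R (Set.range v)) < m}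
  calc ∑ T : Fin d → β, #(badTuples R m (commonNeighbors (swap R) (Set.range T)) k ∅)
      = ∑ T : Fin d → β, #{v ∈ bad | Set.range v ⊆ commonNeighbors (swap R) (Set.range T)} := by
        refine sum_congr rfl fun T _ => congrArg card ?_
        ext v
        simp only [mem_badTuples, Set.empty_union, bad, mem_filter, mem_univ, true_and,
          Set.range_subset_iff, mem_coe, and_comm]
    _ = ∑ v ∈ bad, #{T : Fin d → β | Set.range v ⊆ commonNeighbors (swap R) (Set.range T)} :=
        sum_card_bipartiteAbove_eq_sum_card_bipartiteBelow _
    _ = ∑ v ∈ bad, #(commonNeighbors R (Set.range v)) ^ d := by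
        simp only [card_filter_subset_commonNeighbors_range]
    _ ≤ #bad * m ^ d :=
        sum_le_card_nsmul _ _ _ fun v hv => Nat.pow_le_pow_left (mem_filter.mp hv).2.le d
    _ ≤ Fintype.card α ^ k * m ^ d := by
        gcongr
        simpa using card_le_univ bad

lemma le_sum_card_commonNeighbors_range_pow {R : α → β → Prop} {p : ℝ} (hp : 0 ≤ p)
    (hR : Fintype.card α * (p * Fintype.card β) ≤ ∑ v, (#(commonNeighbors R {v}) : ℝ)) (d k : ℕ) :
    Fintype.card β ^ d * (p ^ d * Fintype.card α) ^ k ≤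
      ∑ T : Fin d → β, (#(commonNeighbors (swap R) (Set.range T)) : ℝ) ^ k := by
  have hcard : (#(univ : Finset (Fin d → β)) : ℝ) = Fintype.card β ^ d := by simp
  rw [← hcard]
  refine card_mul_pow_le_sum_pow (fun _ _ => Nat.cast_nonneg _) (by positivity) ?_ k
  calc #(univ : Finset (Fin d → β)) * (p ^ d * Fintype.card α)
      = Fintype.card α * (p * Fintype.card β) ^ d := by rw [hcard]; ring
    _ ≤ ∑ v, (#(commonNeighbors R {v}) : ℝ) ^ d :=
        card_mul_pow_le_sum_pow (fun _ _ => Nat.cast_nonneg _) (by positivity) hR d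
    _ = ∑ T : Fin d → β, (#(commonNeighbors (swap R) (Set.range T)) : ℝ) := by
        exact_mod_cast (sum_card_commonNeighbors_range R d).symm

lemma sum_mul_card_badTuples_le (R : α → β → Prop) {p : ℝ} {D m : ℕ}
    (hβ : 8 * D * m ≤ p ^ D * Fintype.card β) :
    ∑ T : Fin D → β,
        ((2 * D) ^ D * #(badTuples R m (commonNeighbors (swap R) (Set.range T)) D ∅) : ℝ) ≤
      Fintype.card β ^ D * (p ^ D * Fintype.card α / 4) ^ D := by
  calc ∑ T : Fin D → β,
        ((2 * D) ^ D * #(badTuples R m (commonNeighbors (swap R) (Set.range T)) D ∅) : ℝ)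
      ≤ (2 * D) ^ D * (Fintype.card α ^ D * m ^ D) := by
        rw [← mul_sum]
        gcongr
        exact_mod_cast sum_card_badTuples_le R m D D
    _ = Fintype.card α ^ D * (2 * D * m) ^ D := by ring
    _ ≤ Fintype.card α ^ D * (p ^ D * Fintype.card β / 4) ^ D := by gcongr; linarith
    _ = Fintype.card β ^ D * (p ^ D * Fintype.card α / 4) ^ D := by ring

/-- Dependent random choice: `U` is the common neighbourhood of a suitable `D`-tuple `T`. On average
over `T`, `#U ^ D` exceeds `(2 * D) ^ D` times the number of bad `D`-tuples in `U`, plus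
`(2 * m) ^ D`. -/
theorem exists_isGood_empty {R : α → β → Prop} {p : ℝ} {D m : ℕ} (hp : 0 ≤ p) (hD : 0 < D)
    (hm : 0 < m)
    (hR : Fintype.card α * (p * Fintype.card β) ≤ ∑ v, (#(commonNeighbors R {v}) : ℝ))
    (hα : 8 * m ≤ p ^ D * Fintype.card α) (hβ : 8 * D * m ≤ p ^ D * Fintype.card β) :
    ∃ U : Finset α, 2 * m < #U ∧ IsGood R m (2 * D) U D ∅ := by
  let sample (T : Fin D → β) : Finset α := commonNeighbors (swap R) (Set.range T)
  set M : ℝ := (Fintype.card β : ℝ)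
  set x : ℝ := p ^ D * Fintype.card α
  have hM : 0 < M :=
    pos_of_mul_pos_right (lt_of_lt_of_le (by positivity) hβ) (by positivity)
  have hx : 0 < x := lt_of_lt_of_le (by positivity) hα
  have hbad : ∑ T, ((2 * D) ^ D * #(badTuples R m (sample T) D ∅) : ℝ) ≤ M ^ D * (x / 4) ^ D :=
    sum_mul_card_badTuples_le R hβ
  have hsmall : ∑ _T : Fin D → β, (2 * m : ℝ) ^ D ≤ M ^ D * (x / 4) ^ D := by
    calc ∑ _T : Fin D → β, (2 * m : ℝ) ^ D = M ^ D * (2 * m) ^ D := by simp [M]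
      _ ≤ M ^ D * (x / 4) ^ D := by gcongr; linarith
  obtain ⟨T, -, hT⟩ : ∃ T ∈ (univ : Finset (Fin D → β)),
      ((2 * D) ^ D * #(badTuples R m (sample T) D ∅) + (2 * m) ^ D : ℝ) < #(sample T) ^ D := by
    apply exists_lt_of_sum_lt
    calc ∑ T, ((2 * D) ^ D * #(badTuples R m (sample T) D ∅) + (2 * m) ^ D : ℝ)
        ≤ M ^ D * (2 * (x / 4) ^ D) := by
          rw [sum_add_distrib]
          linarith
      _ < M ^ D * x ^ D := by
          gcongr
          exact two_mul_div_four_pow_lt hx hD.ne'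
      _ ≤ ∑ T, (#(sample T) : ℝ) ^ D := le_sum_card_commonNeighbors_range_pow hp hR D D
  have hT' : (2 * D) ^ D * #(badTuples R m (sample T) D ∅) + (2 * m) ^ D < #(sample T) ^ D := by
    exact_mod_cast hT
  exact ⟨sample T, lt_of_pow_lt_pow_left' D (by omega), (Nat.le_add_right _ _).trans_lt hT'⟩

end DependentRandomChoice

section Embedding

variable {V W : Type*} {R : V → V → Prop} {D : ℕ}

lemma update_eqOn_of_notMem [DecidableEq W] {g : W → V} {A : Set W} {a : W} {v : V} (ha : a ∉ A) :
    A.EqOn (update g a v) g :=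
  fun _ hx => update_of_ne (ne_of_mem_of_not_mem hx ha) _ _

lemma update_injOn_insert [DecidableEq W] {g : W → V} {A : Set W} {a : W} {v : V}
    (hg : A.InjOn g) (ha : a ∉ A) (hv : v ∉ g '' A) : (insert a A).InjOn (update g a v) := by
  have hEq : A.EqOn (update g a v) g := update_eqOn_of_notMem ha
  rw [Set.injOn_insert ha, hEq.image_eq, update_self]
  exact ⟨hEq.injOn_iff.mpr hg, hv⟩

variable [Fintype W]

lemma card_image_lt_card_of_notMem [DecidableEq V] {A : Finset W} {a : W} (g : W → V) (ha : a ∉ A) :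
    #(A.image g) < Fintype.card W :=
  card_image_le.trans_lt (card_lt_univ_of_notMem ha)

/-- Embedding a vertex costs one unit of goodness for each of its neighbours `b`, so what `b` has
left still pays for its neighbours outside `A`. -/
lemma exists_injOn_forall_isGood [Fintype V] (hD : 0 < D) {H : SimpleGraph W}
    (hH : ∀ w, (H.neighborSet w).ncard ≤ D) {m : ℕ} {U : Finset V} (hm : Fintype.card W ≤ m)
    (hU : 2 * m < #U) (hgood : IsGood R m (2 * D) U D ∅) (A : Finset W) :
    ∃ g : W → V, Set.InjOn g A ∧ ∀ b,
      IsGood R m (2 * D) U (H.neighborSet b \ A).ncard (g '' (H.neighborSet b ∩ A)) := by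
  classical
  induction A using Finset.induction_on with
  | empty =>
    obtain ⟨u, -⟩ : U.Nonempty := card_pos.mp (by omega)
    exact ⟨fun _ => u, by simp, fun b => by simpa using hgood.mono_left (by omega) (hH b)⟩
  | insert a A ha ih =>
    obtain ⟨g, hinj, hg⟩ := ih
    have ha' : a ∉ (A : Set W) := ha
    have hstep : ∀ b ∈ (H.neighborSet a).toFinset, IsGood R m (2 * D) U
        ((H.neighborSet b \ insert a (A : Set W)).ncard + 1) (g '' (H.neighborSet b ∩ A)) := by
      intro b hb
      have hab : a ∈ H.neighborSet b \ A := ⟨(Set.mem_toFinset.mp hb).symm, ha⟩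
      rw [← Set.union_singleton, ← Set.sdiff_sdiff, Set.ncard_sdiff_singleton_add_one hab]
      exact hg b
    have hdeg : #(H.neighborSet a).toFinset ≤ D := by
      rw [← Set.ncard_eq_toFinset_card']
      exact hH a
    have hused : #(A.image g) < Fintype.card W := card_image_lt_card_of_notMem g ha
    obtain ⟨v, -, hv_new, hv_good⟩ :=
      exists_forall_isGood_insert hD hdeg hstep (Z := A.image g) (by omega)
    have hEq : (A : Set W).EqOn (update g a v) g := update_eqOn_of_notMem ha'
    refine ⟨update g a v, ?_, fun b => ?_⟩ <;> rw [coe_insert]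
    · exact update_injOn_insert hinj ha' (by simpa using hv_new)
    have himage : update g a v '' (H.neighborSet b ∩ A) = g '' (H.neighborSet b ∩ A) :=
      (hEq.mono Set.inter_subset_right).image_eq
    by_cases hab : H.Adj a b
    · have hba : a ∈ H.neighborSet b := hab.symm
      rw [Set.inter_insert_of_mem hba, Set.image_insert_eq, update_self, himage]
      exact hv_good b (Set.mem_toFinset.mpr hab)
    · have hba : a ∉ H.neighborSet b := fun h => hab h.symm
      rw [Set.inter_insert_of_notMem hba, Set.sdiff_insert_of_notMem hba, himage]
      exact hg b

lemma exists_injOn_union_eqOn_forall_mem [DecidableEq W] {A : Finset W} {g₀ : W → V}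
    (hg₀ : Set.InjOn g₀ A) {C : W → Finset V} (hC : ∀ w, Fintype.card W ≤ #(C w))
    {B : Finset W} (hAB : Disjoint A B) :
    ∃ g : W → V, Set.InjOn g ↑(A ∪ B) ∧ Set.EqOn g g₀ A ∧ ∀ b ∈ B, g b ∈ C b := by
  classical
  induction B using Finset.induction_on with
  | empty => exact ⟨g₀, by simpa using hg₀, Set.eqOn_refl _ _, by simp⟩
  | insert b B hb ih =>
    rw [disjoint_insert_right] at hAB
    obtain ⟨g, hinj, hEq, hmem⟩ := ih hAB.2
    have hb' : b ∉ A ∪ B := by simp [hb, hAB.1]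
    obtain ⟨v, hv, hv_new⟩ := exists_mem_notMem_of_card_lt_card
      ((card_image_lt_card_of_notMem g hb').trans_le (hC b))
    have hEq' : Set.EqOn (update g b v) g ↑(A ∪ B) := update_eqOn_of_notMem hb'
    refine ⟨update g b v, ?_, ?_, forall_mem_insert _ _ _ |>.mpr ⟨?_, fun x hx => ?_⟩⟩
    · rw [union_insert, coe_insert]
      exact update_injOn_insert hinj hb' (by simpa using hv_new)
    · exact (hEq'.mono (by simp)).trans hEq
    · rwa [update_self]
    · rw [hEq' (by simp [hx])]
      exact hmem x hx

theorem exists_embedding_of_dense [Fintype V] [Std.Symm R] {p : ℝ} (hp : 0 ≤ p) (hD : 0 < D)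
    {H : SimpleGraph W} (hcol : H.Colorable 2) (hH : ∀ w, (H.neighborSet w).ncard ≤ D)
    (hdense : Fintype.card V * (p * Fintype.card V) ≤ ∑ v, (#(commonNeighbors R {v}) : ℝ))
    (hcard : 8 * D * Fintype.card W ≤ p ^ D * Fintype.card V) :
    ∃ f : W ↪ V, ∀ a b, H.Adj a b → R (f a) (f b) := by
  classical
  obtain _ | _ := isEmpty_or_nonempty W
  · exact ⟨.ofIsEmpty, fun a => isEmptyElim a⟩
  have hcard' : 8 * (Fintype.card W : ℝ) ≤ p ^ D * Fintype.card V := by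
    refine le_trans ?_ hcard
    gcongr
    exact le_mul_of_one_le_right (by norm_num) (by exact_mod_cast hD)
  obtain ⟨U, hU, hgood⟩ :=
    exists_isGood_empty hp hD Fintype.card_pos hdense hcard' hcard
  obtain ⟨C⟩ := hcol
  let A : Finset W := {w | C w = 0}
  obtain ⟨g₀, hinj₀, hg₀⟩ := exists_injOn_forall_isGood hD hH le_rfl hU hgood A
  obtain ⟨g, hinj, hEq, hmem⟩ := exists_injOn_union_eqOn_forall_mem hinj₀
    (fun b => (hg₀ b).le_card_commonNeighbors (by omega)) (disjoint_compl_right (a := A))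
  rw [union_compl, coe_univ, Set.injOn_univ] at hinj
  have hgR : ∀ a ∈ A, ∀ b ∉ A, H.Adj a b → R (g a) (g b) := by
    intro a ha b hb hab
    rw [hEq ha]
    exact mem_commonNeighbors.mp (hmem b (mem_compl.mpr hb)) _ ⟨a, ⟨hab.symm, ha⟩, rfl⟩
  refine ⟨⟨g, hinj⟩, fun a b hab => ?_⟩
  have hC : C a ≠ C b := C.valid hab
  have hmemA (w : W) : w ∈ A ↔ C w = 0 := mem_filter_univ w
  by_cases ha : a ∈ A
  · exact hgR a ha b (by grind) hab
  · exact symm_of R (hgR b (by grind) a ha hab.symm)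

end Embedding

section Coloring

variable {V κ : Type*}

/-- `p` is the vertex set of a monochromatic copy, in the colouring `c`, of one of the graphs
`F 1, F 2, …`. -/
def IsMonochromaticCopy (c : V → V → κ) (F : (i : ℕ) → SimpleGraph (Fin i)) (p : Finset V) :
    Prop :=
  ∃ (i : ℕ) (_ : 1 ≤ i) (col : κ) (f : Fin i ↪ V),
    univ.map f = p ∧ ∀ a b, (F i).Adj a b → c (f a) (f b) = col

lemma isMonochromaticCopy_singleton (c : V → V → κ) (F : (i : ℕ) → SimpleGraph (Fin i)) (x : V) :
    IsMonochromaticCopy c F {x} :=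
  ⟨1, le_rfl, c x x, ⟨fun _ => x, injective_of_subsingleton _⟩, rfl, by simp⟩

lemma exists_color_dense [Fintype κ] [Fintype V] [Nonempty κ] (c : V → V → κ) :
    ∃ col, Fintype.card V * ((Fintype.card κ : ℝ)⁻¹ * Fintype.card V) ≤
      ∑ v, (#(commonNeighbors (fun a b => c a b = col) {v}) : ℝ) := by
  classical
  have hcount : ∑ col, ∑ v, #(commonNeighbors (fun a b => c a b = col) {v}) =
      Fintype.card V * Fintype.card V := by
    rw [sum_comm, ← smul_eq_mul, ← card_univ, ← sum_const]
    refine sum_congr rfl fun v _ => ?_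
    simp only [commonNeighbors, Set.mem_singleton_iff, forall_eq]
    exact (card_eq_sum_card_fiberwise fun _ _ => mem_coe.mpr (mem_univ _)).symm
  have hκ : (Fintype.card κ : ℝ) ≠ 0 := by simp
  obtain ⟨col, -, hcol⟩ := exists_le_of_sum_le (s := (univ : Finset κ)) univ_nonempty
    (f := fun _ => Fintype.card V * ((Fintype.card κ : ℝ)⁻¹ * Fintype.card V))
    (g := fun col => ∑ v, (#(commonNeighbors (fun a b => c a b = col) {v}) : ℝ))
    (by
      refine le_of_eq ?_
      rw [sum_const, card_univ, nsmul_eq_mul, mul_left_comm, mul_inv_cancel_left₀ hκ]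
      exact_mod_cast hcount.symm)
  exact ⟨col, hcol⟩

variable [Fintype κ] {Δ : ℕ}

lemma exists_monochromatic_embedding [Fintype V] [Nonempty κ] {W : Type*} [Fintype W]
    {c : V → V → κ} (hc : ∀ a b, c a b = c b a) (hΔ : 0 < Δ) {H : SimpleGraph W}
    (hcol : H.Colorable 2) (hH : ∀ w, (H.neighborSet w).ncard ≤ Δ)
    (hcard : 8 * Δ * Fintype.card κ ^ Δ * Fintype.card W ≤ Fintype.card V) :
    ∃ (col : κ) (f : W ↪ V), ∀ a b, H.Adj a b → c (f a) (f b) = col := by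
  obtain ⟨col, hdense⟩ := exists_color_dense c
  have : Std.Symm fun a b => c a b = col := ⟨fun a b hab => (hc b a).trans hab⟩
  refine ⟨col, exists_embedding_of_dense (by positivity) hΔ hcol hH hdense ?_⟩
  rw [inv_pow, inv_mul_eq_div, le_div_iff₀ (by positivity)]
  calc (8 * Δ * Fintype.card W * Fintype.card κ ^ Δ : ℝ)
      = (8 * Δ * Fintype.card κ ^ Δ * Fintype.card W : ℕ) := by push_cast; ring
    _ ≤ Fintype.card V := by exact_mod_cast hcard

variable {c : V → V → κ} {F : (i : ℕ) → SimpleGraph (Fin i)}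

lemma exists_isMonochromaticCopy_subset (hc : ∀ a b, c a b = c b a) (hΔ : 0 < Δ)
    (hbip : ∀ i, 1 ≤ i → (F i).Colorable 2)
    (hdeg : ∀ i, 1 ≤ i → ∀ v, ((F i).neighborSet v).ncard ≤ Δ)
    {X : Finset V} (hX : X.Nonempty) :
    ∃ p ⊆ X, IsMonochromaticCopy c F p ∧ #X ≤ 16 * Δ * Fintype.card κ ^ Δ * #p := by
  obtain ⟨x, hx⟩ := hX
  have : Nonempty κ := ⟨c x x⟩
  rw [show 16 * Δ * Fintype.card κ ^ Δ = 2 * (8 * Δ * Fintype.card κ ^ Δ) by ring]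
  have hL_pos : 0 < 8 * Δ * Fintype.card κ ^ Δ := by positivity
  set L := 8 * Δ * Fintype.card κ ^ Δ
  obtain hsmall | hlarge := lt_or_ge #X L
  · refine ⟨{x}, by simpa using hx, isMonochromaticCopy_singleton c F x, ?_⟩
    rw [card_singleton]
    omega
  set m := #X / L
  have hm : 1 ≤ m := (Nat.one_le_div_iff hL_pos).mpr hlarge
  obtain ⟨col, f, hf⟩ := exists_monochromatic_embedding (V := X) (W := Fin m)
    (c := fun a b => c a b) (fun a b => hc a b) hΔ (hbip m hm) (hdeg m hm)
    (by simpa using Nat.mul_div_le #X L)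
  refine ⟨univ.map (f.trans (.subtype _)), ?_, ⟨m, hm, col, _, rfl, hf⟩, ?_⟩
  · intro y hy
    obtain ⟨w, -, rfl⟩ := mem_map.mp hy
    exact (f w).2
  · rw [card_map, card_univ, Fintype.card_fin]
    calc #X ≤ L * m + L := (Nat.lt_mul_div_succ #X hL_pos).le
      _ ≤ L * m + L * m := by gcongr; exact Nat.le_mul_of_pos_right L hm
      _ = 2 * L * m := by ring

theorem stmt_5_general [DecidableEq V] (hc : ∀ a b, c a b = c b a) (hΔ : 0 < Δ)
    (hbip : ∀ i, 1 ≤ i → (F i).Colorable 2)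
    (hdeg : ∀ i, 1 ≤ i → ∀ v, ((F i).neighborSet v).ncard ≤ Δ) (X : Finset V) :
    ∃ s : ℕ, HasTiling (IsMonochromaticCopy c F) X s ∧
      (s : ℝ) ≤ 16 * Δ * (Fintype.card κ : ℝ) ^ Δ * (Real.log #X + 1) := by
  refine exists_hasTiling_le_log (by positivity) (fun Y hY => ?_) X
  obtain ⟨p, hpY, hp, hcard⟩ := exists_isMonochromaticCopy_subset hc hΔ hbip hdeg hY
  exact ⟨p, hpY, hp, by exact_mod_cast hcard⟩

end Coloring

/-- Any r-edge-colouring of K_n admits a monochromatic F-tiling of size at most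
`64 Δ r^Δ (log n + 2)` for a bipartite Δ-bounded graph sequence F. -/
theorem stmt_5 (r Δ : ℕ) (hr : 0 < r) (hΔ : 0 < Δ)
    (F : (i : ℕ) → SimpleGraph (Fin i))
    (hbip : ∀ i, 1 ≤ i → (F i).Colorable 2)
    (hdeg : ∀ i, 1 ≤ i → ∀ v, ((F i).neighborSet v).ncard ≤ Δ)
    (n : ℕ) (c : Fin n → Fin n → Fin r) (hsym : ∀ a b, c a b = c b a) :
    ∃ (s : ℕ) (parts : Fin s → Finset (Fin n)),
      (s : ℝ) ≤ 64 * Δ * (r : ℝ) ^ Δ * (Real.log (n : ℝ) + 2) ∧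
      (∀ j j', j ≠ j' → Disjoint (parts j) (parts j')) ∧
      Finset.univ.biUnion parts = Finset.univ ∧
      ∀ j, ∃ (i : ℕ) (_ : 1 ≤ i) (col : Fin r) (f : Fin i ↪ Fin n),
        Finset.univ.map f = parts j ∧
        ∀ a b, (F i).Adj a b → c (f a) (f b) = col := by
  obtain ⟨s, ⟨parts, hdisj, hcover, htile⟩, hs⟩ := stmt_5_general hsym hΔ hbip hdeg univ
  refine ⟨s, parts, hs.trans ?_, hdisj, hcover, htile⟩
  rw [Fintype.card_fin, card_univ, Fintype.card_fin]
  gcongr <;> norm_num
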